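/- For any ordered logic program (Π,<), the operator A°_{(Π,<)} = C°_{(Π,<)}∘C_Π is monotonic: for all sets of literals X₁, X₂, if X₁ ⊆ X₂ then A°_{(Π,<)}(X₁) ⊆ A°_{(Π,<)}(X₂). -/

import Mathlib

open scoped Classical

/-- A literal: an atom `A` or its classical negation `¬A`. -/
inductive Lit (α : Type) : Type
  | pos : α → Lit α
  | neg : α → Lit α

/-- A rule with a head literal and finite positive and negative bodies. -/
structure Rule (α : Type) where
  head : Lit α
  pbody : Finset (Lit α)
  nbody : Finset (Lit α)

/-- A program is a set of rules (finiteness is stated as a hypothesis). -/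
abbrev Program (α : Type) := Set (Rule α)

/-- `X` is consistent if it contains no complementary pair. -/
def Consistent {α : Type} (X : Set (Lit α)) : Prop :=
  ¬ ∃ A : α, Lit.pos A ∈ X ∧ Lit.neg A ∈ X

/-- `X` is logically closed if it is consistent or equals the set of all literals. -/
def LogClosed {α : Type} (X : Set (Lit α)) : Prop :=
  Consistent X ∨ X = Set.univ

/-- `X` is closed under (basic) program `P`. -/
def ClosedUnder {α : Type} (P : Program α) (X : Set (Lit α)) : Prop :=
  ∀ r ∈ P, ↑r.pbody ⊆ X → r.head ∈ X

/-- `Cn P` : the smallest logically closed set closed under basic program `P`. -/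
def Cn {α : Type} (P : Program α) : Set (Lit α) :=
  ⋂₀ {X | LogClosed X ∧ ClosedUnder P X}

/-- The reduct of `P` relative to `X`. -/
def reduct {α : Type} (P : Program α) (X : Set (Lit α)) : Program α :=
  {s | ∃ r ∈ P, (↑r.nbody ∩ X = (∅ : Set (Lit α))) ∧ s = ⟨r.head, r.pbody, ∅⟩}

/-- A program is basic if all its rules have empty negative body. -/
def IsBasic {α : Type} (P : Program α) : Prop := ∀ r ∈ P, r.nbody = ∅

/-- `C_Π(X) = Cn(Π^X)`. -/
noncomputable def Cop {α : Type} (P : Program α) (X : Set (Lit α)) : Set (Lit α) :=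
  Cn (reduct P X)

/-- `A_Π(X) = C_Π(C_Π(X))`. -/
noncomputable def Aop {α : Type} (P : Program α) (X : Set (Lit α)) : Set (Lit α) :=
  Cop P (Cop P X)

/-- `X` is an answer set of `P` iff `Cn(P^X) = X`. -/
def AnswerSet {α : Type} (P : Program α) (X : Set (Lit α)) : Prop :=
  Cn (reduct P X) = X

/-- Immediate consequence operator for a basic program. -/
noncomputable def T {α : Type} (P : Program α) (X : Set (Lit α)) : Set (Lit α) :=
  if Consistent X then {L | ∃ r ∈ P, ↑r.pbody ⊆ X ∧ L = r.head} else Set.univ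

/-- `r` is active wrt `(X, Y)`. -/
def Active {α : Type} (r : Rule α) (X Y : Set (Lit α)) : Prop :=
  ↑r.pbody ⊆ X ∧ ↑r.nbody ∩ Y = (∅ : Set (Lit α))

/-- Extended immediate consequence operator `T_{Π,Y}(X)`. -/
noncomputable def TE {α : Type} (P : Program α) (Y X : Set (Lit α)) : Set (Lit α) :=
  if Consistent X then {L | ∃ r ∈ P, Active r X Y ∧ L = r.head} else Set.univ

/-- Preference-sensitive operator `T_{(Π,<),Y}(X)` (Definition 1). -/
noncomputable def TP {α : Type} (P : Program α) (lt : Rule α → Rule α → Prop)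
    (Y X : Set (Lit α)) : Set (Lit α) :=
  if Consistent X then
    {L | ∃ r ∈ P, Active r X Y ∧
      (¬ ∃ r' ∈ P, lt r r' ∧ Active r' Y X ∧ r'.head ∉ X) ∧ L = r.head}
  else Set.univ

/-- `C_{(Π,<)}(X)` (Definition 2). -/
noncomputable def CP {α : Type} (P : Program α) (lt : Rule α → Rule α → Prop)
    (X : Set (Lit α)) : Set (Lit α) :=
  ⋃ i : ℕ, (TP P lt X)^[i] ∅

/-- `A_{(Π,<)}(X) = C_{(Π,<)}(C_{(Π,<)}(X))`. -/
noncomputable def AP {α : Type} (P : Program α) (lt : Rule α → Rule α → Prop)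
    (X : Set (Lit α)) : Set (Lit α) :=
  CP P lt (CP P lt X)

/-- The set `D^r_{(X,Y)}` of removable literals. -/
def D {α : Type} (P : Program α) (lt : Rule α → Rule α → Prop) (r : Rule α)
    (X Y : Set (Lit α)) : Set (Lit α) :=
  {L | ∀ r' ∈ P, r'.head = L → ↑r'.pbody ⊆ Y →
      lt r' r ∧ ({r.head} ∪ X) ∩ ↑r'.nbody ≠ (∅ : Set (Lit α))}

/-- `T°_{(Π,<),Y}(X)` (Definition 3). -/
noncomputable def TN {α : Type} (P : Program α) (lt : Rule α → Rule α → Prop)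
    (Y X : Set (Lit α)) : Set (Lit α) :=
  if Consistent X then
    {L | ∃ r ∈ P, Active r X (Y \ D P lt r X Y) ∧ L = r.head}
  else Set.univ

/-- `C°_{(Π,<)}(X)` (Definition 4). -/
noncomputable def CN {α : Type} (P : Program α) (lt : Rule α → Rule α → Prop)
    (X : Set (Lit α)) : Set (Lit α) :=
  ⋃ i : ℕ, (TN P lt X)^[i] ∅

/-- `A°_{(Π,<)}(X) = C°_{(Π,<)}(C_Π(X))`. -/
noncomputable def AN {α : Type} (P : Program α) (lt : Rule α → Rule α → Prop)
    (X : Set (Lit α)) : Set (Lit α) :=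
  CN P lt (Cop P X)

theorem Cop_anti {α : Type} (P : Program α) {X₁ X₂ : Set (Lit α)} (h : X₁ ⊆ X₂) :
    Cop P X₂ ⊆ Cop P X₁ := by
  intro L hL Z hZ
  refine hL Z ⟨hZ.1, ?_⟩
  rintro s ⟨r, hr, hn, rfl⟩
  refine hZ.2 _ ⟨r, hr, ?_, rfl⟩
  exact Set.subset_eq_empty (Set.inter_subset_inter_right _ h) hn

theorem D_mono {α : Type} (P : Program α) (lt : Rule α → Rule α → Prop) (r : Rule α)
    {X X' Y Y' : Set (Lit α)} (hX : X ⊆ X') (hY : Y' ⊆ Y) :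
    D P lt r X Y ⊆ D P lt r X' Y' := by
  intro L hL r' hr' hh hp
  obtain ⟨h1, h2⟩ := hL r' hr' hh (hp.trans hY)
  refine ⟨h1, fun he => h2 ?_⟩
  exact Set.subset_eq_empty
    (Set.inter_subset_inter_left _ (Set.union_subset_union_right _ hX)) he

theorem TN_mono {α : Type} (P : Program α) (lt : Rule α → Rule α → Prop)
    {X X' Y Y' : Set (Lit α)} (hX : X ⊆ X') (hY : Y' ⊆ Y) :
    TN P lt Y X ⊆ TN P lt Y' X' := by
  unfold TN
  by_cases hc' : Consistent X'
  · have hc : Consistent X := fun ⟨A, h1, h2⟩ => hc' ⟨A, hX h1, hX h2⟩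
    rw [if_pos hc, if_pos hc']
    rintro L ⟨r, hr, ⟨hp, hn⟩, rfl⟩
    refine ⟨r, hr, ⟨hp.trans hX, ?_⟩, rfl⟩
    refine Set.subset_eq_empty (Set.inter_subset_inter_right _ ?_) hn
    exact Set.diff_subset_diff hY (D_mono P lt r hX hY)
  · rw [if_neg hc']
    exact Set.subset_univ _

/-- `A°_{(Π,<)} = C°_{(Π,<)} ∘ C_Π` is monotonic. -/
theorem AN_monotone {α : Type} (P : Program α) (hfin : P.Finite)
    (lt : Rule α → Rule α → Prop)
    (hirr : ∀ r, ¬ lt r r) (htrans : ∀ r₁ r₂ r₃, lt r₁ r₂ → lt r₂ r₃ → lt r₁ r₃)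
    (X₁ X₂ : Set (Lit α)) (h : X₁ ⊆ X₂) :
    AN P lt X₁ ⊆ AN P lt X₂ := by
  refine Set.iUnion_mono fun i => ?_
  induction i with
  | zero => exact subset_rfl
  | succ n ih =>
    rw [Function.iterate_succ_apply', Function.iterate_succ_apply']
    exact TN_mono P lt ih (Cop_anti P h)
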